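/- Let W ∈ ℝ^{n×n} be symmetric and doubly stochastic, let J := (1/n)𝟙𝟙ᵀ, let σ₂ := ‖W − J‖₂, and fix an integer t ≥ 1. Let y_1,…,y_n, G_1,…,G_n, G'_1,…,G'_n be real d×r matrices with (1/n)∑_i y_i = (1/n)∑_i G_i, and define the gradient-tracking update y'_i := ∑_{j=1}^n (W^t)_{ij} y_j + G'_i − G_i for each i. Let Ĝ := (1/n)∑_i G_i and Ĝ' := (1/n)∑_i G'_i. Then (1/n)∑_i y'_i = Ĝ' and ( ∑_{i=1}^n ‖y'_i − Ĝ'‖_F² )^{1/2} ≤ σ₂^t ( ∑_{i=1}^n ‖y_i − Ĝ‖_F² )^{1/2} + ( ∑_{i=1}^n ‖G'_i − G_i‖_F² )^{1/2}. -/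

import Mathlib

open Matrix

/-- Frobenius norm of a real matrix. -/
noncomputable def frobNorm {m n : ℕ} (A : Matrix (Fin m) (Fin n) ℝ) : ℝ :=
  Real.sqrt (∑ i, ∑ j, (A i j) ^ 2)

/-- Spectral (operator) norm of a real matrix. -/
noncomputable def specNorm {m n : ℕ} (A : Matrix (Fin m) (Fin n) ℝ) : ℝ :=
  ‖LinearMap.toContinuousLinearMap (Matrix.toEuclideanLin A)‖

/-!
Write `J` for the averaging matrix and let matrices over the index type act on families of vectors.
Since `W J = J W = J`, the matrix `J` sends the update `y' = W ^ t y + G' - G` to `J G'`, and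
`(W - J) ^ t (1 - J) = W ^ t - J` gives
`y' - J G' = (W - J) ^ t (y - J G) + (1 - J) (G' - G)`,
where `1 - J` is an orthogonal projection.

The spectral norm of a matrix `A` also bounds its action on families of vectors in an inner product
space, in any dimension: `‖A‖ ^ 2 - Aᴴ A` is positive semidefinite, hence of the form `Bᴴ B`, so
`‖A‖ ^ 2 ‖x‖ ^ 2 - ‖A x‖ ^ 2 = ‖B x‖ ^ 2 ≥ 0`.
-/

theorem mul_pow_eq_self_of_mul_eq_self {M : Type*} [Monoid M] {p a : M} (h : p * a = p) (t : ℕ) :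
    p * a ^ t = p := by
  induction t with
  | zero => simp
  | succ t ih => rw [pow_succ', ← mul_assoc, h, ih]

theorem sub_pow_mul_one_sub {R : Type*} [Ring R] {p a : R} (hp : IsIdempotentElem p)
    (hap : a * p = p) (hpa : p * a = p) (t : ℕ) : (a - p) ^ t * (1 - p) = a ^ t - p := by
  induction t with
  | zero => simp
  | succ t ih =>
    calc (a - p) ^ (t + 1) * (1 - p)
        = (a - p) * (a ^ t - p) := by rw [pow_succ', mul_assoc, ih]
      _ = a * a ^ t - a * p - (p * a ^ t - p * p) := by rw [sub_mul, mul_sub, mul_sub]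
      _ = a ^ (t + 1) - p := by
        rw [hap, mul_pow_eq_self_of_mul_eq_self hpa, hp.eq, sub_self, sub_zero, pow_succ']

/-- The averaging matrix `J = (1/n) 𝟙𝟙ᵀ` over an index type `ι` with `n` elements. It acts on
families `ι → E` by replacing every entry by the mean. -/
noncomputable def averagingMatrix (𝕜 ι : Type*) [Field 𝕜] [Fintype ι] : Matrix ι ι 𝕜 :=
  (Fintype.card ι : 𝕜)⁻¹ • of fun _ _ => 1

section AveragingMatrix

open scoped Matrix.Module

variable {𝕜 ι E : Type*} [Field 𝕜] [Fintype ι]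

theorem mul_averagingMatrix {W : Matrix ι ι 𝕜} (hrow : ∀ i, ∑ j, W i j = 1) :
    W * averagingMatrix 𝕜 ι = averagingMatrix 𝕜 ι := by
  ext i j
  simp [averagingMatrix, mul_apply, ← Finset.sum_mul, hrow]

theorem averagingMatrix_mul {W : Matrix ι ι 𝕜} (hcol : ∀ j, ∑ i, W i j = 1) :
    averagingMatrix 𝕜 ι * W = averagingMatrix 𝕜 ι := by
  ext i j
  simp [averagingMatrix, mul_apply, ← Finset.mul_sum, hcol]

theorem isIdempotentElem_averagingMatrix [CharZero 𝕜] [Nonempty ι] :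
    IsIdempotentElem (averagingMatrix 𝕜 ι) :=
  mul_averagingMatrix fun _ => by simp [averagingMatrix]

variable [DecidableEq ι] [AddCommGroup E] [Module 𝕜 E]

theorem averagingMatrix_smul_apply (x : ι → E) (i : ι) :
    (averagingMatrix 𝕜 ι • x) i = (Fintype.card ι : 𝕜)⁻¹ • ∑ j, x j := by
  simp [averagingMatrix, Finset.smul_sum]

theorem averagingMatrix_smul_gradientTracking {W : Matrix ι ι 𝕜} {y G : ι → E}
    (hcol : ∀ j, ∑ i, W i j = 1)
    (hmean : averagingMatrix 𝕜 ι • y = averagingMatrix 𝕜 ι • G) (t : ℕ) (G' : ι → E) :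
    averagingMatrix 𝕜 ι • (W ^ t • y + G' - G) = averagingMatrix 𝕜 ι • G' := by
  rw [smul_sub, smul_add, ← mul_smul, mul_pow_eq_self_of_mul_eq_self (averagingMatrix_mul hcol),
    hmean, add_sub_cancel_left]

end AveragingMatrix

section MatrixAction

open WithLp (toLp)
open scoped Matrix.Norms.L2Operator Matrix.Module MatrixOrder InnerProductSpace

variable {𝕜 ι E : Type*} [RCLike 𝕜] [Fintype ι] [DecidableEq ι]

theorem conjTranspose_mul_self_le_algebraMap_l2_opNorm_sq (A : Matrix ι ι 𝕜) :
    Aᴴ * A ≤ algebraMap ℝ (Matrix ι ι 𝕜) (‖A‖ ^ 2) := by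
  let : NormedAlgebra ℝ (Matrix ι ι 𝕜) :=
    { norm_smul_le := fun r B => by
        rw [RCLike.real_smul_eq_coe_smul (K := 𝕜), norm_smul, RCLike.norm_ofReal,
          Real.norm_eq_abs] }
  rw [sq, ← l2_opNorm_conjTranspose_mul_self]
  refine le_algebraMap_of_spectrum_le (fun r hr => ?_) (isHermitian_conjTranspose_mul_self A)
  cases isEmpty_or_nonempty ι
  · simp at hr
  · exact (Real.le_norm_self r).trans (spectrum.norm_le_norm_of_mem hr)

variable [NormedAddCommGroup E] [InnerProductSpace 𝕜 E]

theorem inner_toLp_conjTranspose_smul_right (A : Matrix ι ι 𝕜) (x y : ι → E) :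
    ⟪toLp 2 x, toLp 2 (Aᴴ • y)⟫_𝕜 = ⟪toLp 2 (A • x), toLp 2 y⟫_𝕜 := by
  simp only [PiLp.inner_apply, Matrix.Module.smul_apply, sum_inner, inner_sum,
    inner_smul_left, inner_smul_right, conjTranspose_apply, RCLike.star_def]
  exact Finset.sum_comm

theorem inner_toLp_conjTranspose_mul_self_smul (A : Matrix ι ι 𝕜) (x : ι → E) :
    ⟪toLp 2 x, toLp 2 ((Aᴴ * A) • x)⟫_𝕜 = (‖toLp 2 (A • x)‖ : 𝕜) ^ 2 := by
  rw [mul_smul, inner_toLp_conjTranspose_smul_right, inner_self_eq_norm_sq_to_K]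

theorem norm_toLp_matrix_smul_le (A : Matrix ι ι 𝕜) (x : ι → E) :
    ‖toLp 2 (A • x)‖ ≤ ‖A‖ * ‖toLp 2 x‖ := by
  obtain ⟨B, hB⟩ : ∃ B : Matrix ι ι 𝕜, algebraMap ℝ _ (‖A‖ ^ 2) - Aᴴ * A = Bᴴ * B :=
    CStarAlgebra.nonneg_iff_eq_star_mul_self.mp
      (sub_nonneg.mpr (conjTranspose_mul_self_le_algebraMap_l2_opNorm_sq A))
  have hsmul : algebraMap ℝ (Matrix ι ι 𝕜) (‖A‖ ^ 2) • x = ((‖A‖ : 𝕜) ^ 2) • x := by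
    ext i
    simp [algebraMap_eq_diagonal, diagonal_apply]
  have hsplit : (‖A‖ * ‖toLp 2 x‖) ^ 2 = ‖toLp 2 (A • x)‖ ^ 2 + ‖toLp 2 (B • x)‖ ^ 2 := by
    rw [← RCLike.ofReal_inj (K := 𝕜)]
    push_cast
    rw [← inner_toLp_conjTranspose_mul_self_smul, ← inner_toLp_conjTranspose_mul_self_smul, ← hB,
      ← inner_add_right, ← WithLp.toLp_add, ← add_smul, add_sub_cancel, hsmul, WithLp.toLp_smul,
      inner_smul_right, inner_self_eq_norm_sq_to_K, mul_pow]
  exact le_of_sq_le_sq (hsplit ▸ le_add_of_nonneg_right (sq_nonneg _)) (by positivity)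

theorem norm_one_sub_averagingMatrix_le [Nonempty ι] : ‖1 - averagingMatrix 𝕜 ι‖ ≤ 1 :=
  IsStarProjection.norm_le _ <| IsStarProjection.one_sub
    ⟨isIdempotentElem_averagingMatrix, by ext; simp [averagingMatrix]⟩

end MatrixAction

section GradientTracking

open WithLp (toLp)
open scoped Matrix.Norms.L2Operator Matrix.Module

variable {𝕜 ι E : Type*} [RCLike 𝕜] [Fintype ι] [DecidableEq ι] [Nonempty ι]
  [NormedAddCommGroup E] [InnerProductSpace 𝕜 E] {W : Matrix ι ι 𝕜} {y G : ι → E}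

theorem norm_gradientTracking_sub_le
    (hrow : ∀ i, ∑ j, W i j = 1) (hcol : ∀ j, ∑ i, W i j = 1)
    (hmean : averagingMatrix 𝕜 ι • y = averagingMatrix 𝕜 ι • G) (t : ℕ) (G' : ι → E) :
    ‖toLp 2 (W ^ t • y + G' - G - averagingMatrix 𝕜 ι • G')‖ ≤
      ‖W - averagingMatrix 𝕜 ι‖ ^ t * ‖toLp 2 (y - averagingMatrix 𝕜 ι • G)‖ +
        ‖toLp 2 (G' - G)‖ := by
  set J := averagingMatrix 𝕜 ι
  have hsplit : W ^ t • y + G' - G - J • G' =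
      (W - J) ^ t • (y - J • G) + (1 - J) • (G' - G) := by
    have hcontract : (W - J) ^ t • (y - J • G) = W ^ t • y - J • G := by
      rw [← hmean, ← sub_smul, ← sub_pow_mul_one_sub isIdempotentElem_averagingMatrix
        (mul_averagingMatrix hrow) (averagingMatrix_mul hcol), mul_smul, sub_smul 1, one_smul]
    rw [hcontract, sub_smul, one_smul, smul_sub]
    abel
  calc ‖toLp 2 (W ^ t • y + G' - G - J • G')‖
      ≤ ‖toLp 2 ((W - J) ^ t • (y - J • G))‖ + ‖toLp 2 ((1 - J) • (G' - G))‖ := by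
        rw [hsplit, WithLp.toLp_add]
        exact norm_add_le _ _
    _ ≤ ‖(W - J) ^ t‖ * ‖toLp 2 (y - J • G)‖ + ‖1 - J‖ * ‖toLp 2 (G' - G)‖ :=
        add_le_add (norm_toLp_matrix_smul_le _ _) (norm_toLp_matrix_smul_le _ _)
    _ ≤ ‖W - J‖ ^ t * ‖toLp 2 (y - J • G)‖ + 1 * ‖toLp 2 (G' - G)‖ := by
        gcongr
        · exact norm_pow_le _ t
        · exact norm_one_sub_averagingMatrix_le
    _ = ‖W - J‖ ^ t * ‖toLp 2 (y - J • G)‖ + ‖toLp 2 (G' - G)‖ := by rw [one_mul]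

theorem gradient_tracking_error_recursion_general
    (hrow : ∀ i, ∑ j, W i j = 1) (hcol : ∀ j, ∑ i, W i j = 1) (t : ℕ) {G' y' : ι → E}
    (hmean : (Fintype.card ι : 𝕜)⁻¹ • ∑ i, y i = (Fintype.card ι : 𝕜)⁻¹ • ∑ i, G i)
    (hupdate : ∀ i, y' i = (∑ j, (W ^ t) i j • y j) + G' i - G i) :
    (Fintype.card ι : 𝕜)⁻¹ • ∑ i, y' i = (Fintype.card ι : 𝕜)⁻¹ • ∑ i, G' i ∧
    √(∑ i, ‖y' i - (Fintype.card ι : 𝕜)⁻¹ • ∑ l, G' l‖ ^ 2) ≤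
      ‖W - averagingMatrix 𝕜 ι‖ ^ t * √(∑ i, ‖y i - (Fintype.card ι : 𝕜)⁻¹ • ∑ l, G l‖ ^ 2) +
        √(∑ i, ‖G' i - G i‖ ^ 2) := by
  obtain rfl : y' = W ^ t • y + G' - G := funext hupdate
  replace hmean : averagingMatrix 𝕜 ι • y = averagingMatrix 𝕜 ι • G := by
    ext i
    simpa only [averagingMatrix_smul_apply] using hmean
  constructor
  · simpa only [averagingMatrix_smul_apply] using
      congrFun (averagingMatrix_smul_gradientTracking hcol hmean t G') (Classical.arbitrary ι)
  · simpa only [PiLp.norm_eq_of_L2, Pi.sub_apply, averagingMatrix_smul_apply] using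
      norm_gradientTracking_sub_le hrow hcol hmean t G'

end GradientTracking

section Frobenius

open scoped Matrix.Norms.Frobenius

theorem frobenius_norm_eq_sqrt {m n α : Type*} [Fintype m] [Fintype n] [SeminormedAddCommGroup α]
    (A : Matrix m n α) : ‖A‖ = √(∑ i, ∑ j, ‖A i j‖ ^ 2) := by
  simp [frobenius_norm_def, Real.sqrt_eq_rpow]

/-- The inner product `⟪A, B⟫ = ∑ i, ∑ j, ⟪A i j, B i j⟫` inducing the Frobenius norm, which makes
results on inner product spaces available for matrices. It is not a global instance because
matrices carry several natural norms. -/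
noncomputable abbrev frobeniusInnerProductSpace {𝕜 m n : Type*} [RCLike 𝕜] [Fintype m]
    [Fintype n] : InnerProductSpace 𝕜 (Matrix m n 𝕜) where
  inner A B := ∑ i, ∑ j, inner 𝕜 (A i j) (B i j)
  norm_sq_eq_re_inner A := by
    rw [frobenius_norm_eq_sqrt, Real.sq_sqrt (by positivity)]
    simp only [map_sum, norm_sq_eq_re_inner (𝕜 := 𝕜)]
  conj_inner_symm A B := by simp [mul_comm]
  add_left A B C := by simp [mul_add, Finset.sum_add_distrib]
  smul_left A B c := by simp [Finset.mul_sum, mul_left_comm]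

theorem frobNorm_eq_frobenius_norm {m n : ℕ} (A : Matrix (Fin m) (Fin n) ℝ) :
    frobNorm A = ‖A‖ := by
  simp only [frobNorm, frobenius_norm_eq_sqrt, Real.norm_eq_abs, sq_abs]

end Frobenius

theorem specNorm_eq_l2_opNorm {m n : ℕ} (A : Matrix (Fin m) (Fin n) ℝ) :
    specNorm A = (open scoped Matrix.Norms.L2Operator in ‖A‖) :=
  rfl

/-- **Gradient-tracking error recursion.**
Let `W` be symmetric doubly stochastic, `σ₂ = ‖W − J‖₂`, and fix `t ≥ 1`.  Given
tracking variables `y_i` and gradients `G_i, G'_i` with `(1/n)∑ y_i = (1/n)∑ G_i`,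
the update `y'_i = ∑_j (W^t)_{ij} y_j + G'_i − G_i` preserves the average
(`(1/n)∑ y'_i = (1/n)∑ G'_i`) and satisfies
`(∑_i ‖y'_i − Ĝ'‖_F²)^{1/2} ≤ σ₂^t (∑_i ‖y_i − Ĝ‖_F²)^{1/2} + (∑_i ‖G'_i − G_i‖_F²)^{1/2}`. -/
theorem gradient_tracking_error_recursion
    (n d r : ℕ) (hn : 0 < n) (W : Matrix (Fin n) (Fin n) ℝ)
    (hsymm : Wᵀ = W)
    (hnonneg : ∀ i j, 0 ≤ W i j)
    (hrow : ∀ i, ∑ j, W i j = 1)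
    (hcol : ∀ j, ∑ i, W i j = 1)
    (t : ℕ) (ht : 1 ≤ t)
    (y G G' y' : Fin n → Matrix (Fin d) (Fin r) ℝ)
    (hmean : (n : ℝ)⁻¹ • ∑ i, y i = (n : ℝ)⁻¹ • ∑ i, G i)
    (hupdate : ∀ i, y' i = (∑ j, (W ^ t) i j • y j) + G' i - G i) :
    (n : ℝ)⁻¹ • ∑ i, y' i = (n : ℝ)⁻¹ • ∑ i, G' i ∧
    Real.sqrt (∑ i, (frobNorm (y' i - (n : ℝ)⁻¹ • ∑ l, G' l)) ^ 2) ≤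
      (specNorm (W - (n : ℝ)⁻¹ • (Matrix.of fun _ _ => (1 : ℝ)))) ^ t *
          Real.sqrt (∑ i, (frobNorm (y i - (n : ℝ)⁻¹ • ∑ l, G l)) ^ 2) +
        Real.sqrt (∑ i, (frobNorm (G' i - G i)) ^ 2) := by
  have : Nonempty (Fin n) := ⟨⟨0, hn⟩⟩
  open scoped Matrix.Norms.Frobenius in
  let := frobeniusInnerProductSpace (𝕜 := ℝ) (m := Fin d) (n := Fin r)
  simpa only [frobNorm_eq_frobenius_norm, specNorm_eq_l2_opNorm, averagingMatrix, Fintype.card_fin]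
    using gradient_tracking_error_recursion_general hrow hcol t
      (by simpa only [Fintype.card_fin] using hmean) hupdate
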